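/- Let n ≥ 1 be a natural number, η > 0, 0 < ε < η, r ≥ 1 and b ∈ ℝ, and let w ∈ ℝ^n with ∑_{k=1}^n w_k² = 1. Set t(w) = η·∑_{k=1}^n w_k − ε·∑_{k=1}^n |w_k|. Then r·Φ(−t(w) − b) + Φ(−t(w) + b) ≥ r·Φ(−√n·(η−ε) − b) + Φ(−√n·(η−ε) + b). (Lemma 2: among unit-norm weight vectors, the uniform weight vector w = (1/√n, …, 1/√n) minimizes the overall robust error under ℓ∞ perturbations of size ε, i.e. the optimal robust classifier has equal weights w₁ = w₂ = ⋯ = w_n.) -/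

import Mathlib

open MeasureTheory ProbabilityTheory

/-- The standard normal CDF, real-valued. -/
noncomputable def stdNormalCDF (t : ℝ) : ℝ := (gaussianReal 0 1 (Set.Iic t)).toReal

/-!
The robust error depends on the weights only through the margin `t(w)`, and decreases in it.
Since `w k ≤ |w k|`, the margin is at most `(η - ε) * ∑ k, |w k|`, and by Cauchy–Schwarz the
`ℓ¹` norm of a unit vector in `ℝⁿ` is at most `√n`. Both bounds are attained at the uniform weights.
-/

variable {ι : Type*}

/-- The worst-case margin `t(w)` of the weights `w` against `ℓ∞` perturbations of size `ε`, when
every coordinate of class `±1` has mean `±η`. -/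
def robustMargin [Fintype ι] (η ε : ℝ) (w : ι → ℝ) : ℝ := η * ∑ k, w k - ε * ∑ k, |w k|

/-- The robust error, up to the normalizing factor `1 / (r + 1)`, of a linear classifier with
bias `b` and worst-case margin `t`, where `r` is the class ratio and `Φ` is the distribution
function of the noise in the score. -/
def robustError (Φ : ℝ → ℝ) (r b t : ℝ) : ℝ := r * Φ (-t - b) + Φ (-t + b)

theorem sum_abs_le_sqrt_card_mul_sqrt_sum_sq (s : Finset ι) (w : ι → ℝ) :
    ∑ k ∈ s, |w k| ≤ √s.card * √(∑ k ∈ s, w k ^ 2) := by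
  simpa using Real.sum_mul_le_sqrt_mul_sqrt s (fun _ ↦ 1) (fun k ↦ |w k|)

theorem robustMargin_le_mul_sum_abs [Fintype ι] {η : ℝ} (hη : 0 ≤ η) (ε : ℝ) (w : ι → ℝ) :
    robustMargin η ε w ≤ (η - ε) * ∑ k, |w k| :=
  calc
    η * ∑ k, w k - ε * ∑ k, |w k| ≤ η * ∑ k, |w k| - ε * ∑ k, |w k| := by
      gcongr with k
      exact le_abs_self (w k)
    _ = (η - ε) * ∑ k, |w k| := (sub_mul ..).symm

theorem robustMargin_le_sqrt_card_mul [Fintype ι] {η ε : ℝ} (hη : 0 ≤ η) (hεη : ε ≤ η)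
    {w : ι → ℝ} (hw : ∑ k, w k ^ 2 ≤ 1) :
    robustMargin η ε w ≤ √(Fintype.card ι) * (η - ε) := by
  have hsum : ∑ k, |w k| ≤ √(Fintype.card ι) :=
    (sum_abs_le_sqrt_card_mul_sqrt_sum_sq Finset.univ w).trans
      (mul_le_of_le_one_right (Real.sqrt_nonneg _) (Real.sqrt_le_one.mpr hw))
  calc
    robustMargin η ε w ≤ (η - ε) * ∑ k, |w k| := robustMargin_le_mul_sum_abs hη ε w
    _ ≤ (η - ε) * √(Fintype.card ι) := mul_le_mul_of_nonneg_left hsum (sub_nonneg.mpr hεη)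
    _ = √(Fintype.card ι) * (η - ε) := mul_comm ..

theorem antitone_robustError {Φ : ℝ → ℝ} (hΦ : Monotone Φ) {r : ℝ} (hr : 0 ≤ r) (b : ℝ) :
    Antitone (robustError Φ r b) := by
  intro t t' htt'
  unfold robustError
  gcongr <;> apply hΦ <;> gcongr

theorem uniform_weights_minimize_robust_error_general [Fintype ι] {Φ : ℝ → ℝ} (hΦ : Monotone Φ)
    {η ε r : ℝ} (hη : 0 ≤ η) (hεη : ε ≤ η) (hr : 0 ≤ r) (b : ℝ)
    {w : ι → ℝ} (hw : ∑ k, w k ^ 2 ≤ 1) :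
    robustError Φ r b (√(Fintype.card ι) * (η - ε)) ≤
      robustError Φ r b (robustMargin η ε w) :=
  antitone_robustError hΦ hr b (robustMargin_le_sqrt_card_mul hη hεη hw)

theorem stdNormalCDF_eq_cdf : stdNormalCDF = cdf (gaussianReal 0 1) :=
  funext fun t ↦ (cdf_eq_real (gaussianReal 0 1) t).symm

theorem monotone_stdNormalCDF : Monotone stdNormalCDF :=
  stdNormalCDF_eq_cdf ▸ monotone_cdf (gaussianReal 0 1)

/-- Lemma 2: among unit-norm weight vectors, the uniform weight vector minimizes the
overall robust error of the linear classifier under `ℓ∞` perturbations of size `ε`. -/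
theorem uniform_weights_minimize_robust_error (n : ℕ) (hn : 1 ≤ n) (η ε r b : ℝ)
    (hη : 0 < η) (hε : 0 < ε) (hεη : ε < η) (hr : 1 ≤ r)
    (w : Fin n → ℝ) (hw : ∑ k, (w k) ^ 2 = 1) :
    r * stdNormalCDF (-(η * ∑ k, w k - ε * ∑ k, |w k|) - b) +
        stdNormalCDF (-(η * ∑ k, w k - ε * ∑ k, |w k|) + b) ≥
      r * stdNormalCDF (-Real.sqrt n * (η - ε) - b) +
        stdNormalCDF (-Real.sqrt n * (η - ε) + b) := by
  simpa [robustError, robustMargin] using uniform_weights_minimize_robust_error_general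
    monotone_stdNormalCDF hη.le hεη.le (zero_le_one.trans hr) b hw.le
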